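/- arXiv:2305.00754 — 2 statements merged into one kernel-verified Lean document; each statement's English description precedes it below -/
import Mathlib

section
/- Let X ∈ ℝ^{I₁×I₂} and let C = X S ∈ ℝ^{I₁×R} and R' = Pᵀ X ∈ ℝ^{R×I₂} be selections of columns and rows of X by selection matrices S, P (submatrices of identity matrices). Then the matrix U = C⁺ X R'⁺ (where ⁺ denotes Moore–Penrose pseudoinverse) minimizes the Frobenius norm ‖X − C U R'‖_F over all matrices U ∈ ℝ^{R×R}. -/
open scoped BigOperators
open Matrix

/-- The four Penrose equations characterizing the Moore-Penrose pseudoinverse. -/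
def Matrix.IsMoorePenrose {m n : Type*} [Fintype m] [Fintype n] {R : Type*}
    [Field R] [StarRing R] (A : Matrix m n R) (B : Matrix n m R) : Prop :=
  A * B * A = A ∧ B * A * B = B ∧ (A * B)ᴴ = A * B ∧ (B * A)ᴴ = B * A

/-- Frobenius norm of a real matrix. -/
noncomputable def frobNorm {a b : ℕ} (A : Matrix (Fin a) (Fin b) ℝ) : ℝ :=
  Real.sqrt (∑ i : Fin a, ∑ j : Fin b, (A i j) ^ 2)

lemma frob_sq_trace {a b : ℕ} (A : Matrix (Fin a) (Fin b) ℝ) :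
    (∑ i : Fin a, ∑ j : Fin b, (A i j) ^ 2) = (Aᵀ * A).trace := by
  simp only [Matrix.trace, Matrix.diag, Matrix.mul_apply, Matrix.transpose_apply]
  rw [Finset.sum_comm]
  simp only [pow_two]

/-- Optimality of the middle matrix U = C⁺ X R'⁺ in the CUR approximation. -/
theorem stmt0 {I₁ I₂ R : ℕ}
    (X : Matrix (Fin I₁) (Fin I₂) ℝ)
    (cs : Fin R → Fin I₂) (rs : Fin R → Fin I₁)
    (hcs : Function.Injective cs) (hrs : Function.Injective rs)
    (S : Matrix (Fin I₂) (Fin R) ℝ) (P : Matrix (Fin I₁) (Fin R) ℝ)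
    (hS : S = fun i r => if i = cs r then 1 else 0)
    (hP : P = fun i r => if i = rs r then 1 else 0)
    (C : Matrix (Fin I₁) (Fin R) ℝ) (R' : Matrix (Fin R) (Fin I₂) ℝ)
    (hC : C = X * S) (hR : R' = Pᵀ * X)
    (Cp : Matrix (Fin R) (Fin I₁) ℝ) (Rp : Matrix (Fin I₂) (Fin R) ℝ)
    (hCp : Matrix.IsMoorePenrose C Cp) (hRp : Matrix.IsMoorePenrose R' Rp)
    (U : Matrix (Fin R) (Fin R) ℝ) (hU : U = Cp * X * Rp) :
    ∀ U' : Matrix (Fin R) (Fin R) ℝ,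
      frobNorm (X - C * U * R') ≤ frobNorm (X - C * U' * R') := by
  intro U'
  obtain ⟨c1, -, c3, -⟩ := hCp
  obtain ⟨r1, -, -, r4⟩ := hRp
  rw [Matrix.conjTranspose_eq_transpose_of_trivial] at c3 r4
  have hc : Cᵀ * (C * Cp) = Cᵀ := by
    have h := congrArg Matrix.transpose c1
    rwa [Matrix.transpose_mul, c3] at h
  have hr : (Rp * R') * R'ᵀ = R'ᵀ := by
    have h := congrArg Matrix.transpose r1
    rwa [Matrix.mul_assoc, Matrix.transpose_mul, r4] at h
  have h0 : Cᵀ * (X - C * U * R') * R'ᵀ = 0 := by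
    have e : Cᵀ * (C * U * R') * R'ᵀ = (Cᵀ * (C * Cp)) * X * ((Rp * R') * R'ᵀ) := by
      rw [hU]; simp only [Matrix.mul_assoc]
    rw [Matrix.mul_sub, Matrix.sub_mul, e, hc, hr, sub_self]
  have h0' : R' * (X - C * U * R')ᵀ * C = 0 := by
    have h := congrArg Matrix.transpose h0
    simpa only [Matrix.transpose_mul, Matrix.transpose_transpose, Matrix.transpose_zero,
      Matrix.mul_assoc] using h
  have hE : X - C * U' * R' = (X - C * U * R') + C * (U - U') * R' := by
    rw [Matrix.mul_sub, Matrix.sub_mul]; abel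
  rw [hE]
  clear hE h0
  generalize X - C * U * R' = E at *
  have hx : (Eᵀ * (C * (U - U') * R')).trace = 0 := by
    have e : Eᵀ * (C * (U - U') * R') = (Eᵀ * C * (U - U')) * R' := by
      simp only [Matrix.mul_assoc]
    rw [e, Matrix.trace_mul_comm, ← Matrix.mul_assoc, ← Matrix.mul_assoc, h0', Matrix.zero_mul,
      Matrix.trace_zero]
  generalize C * (U - U') * R' = D at *
  have hy : (Dᵀ * E).trace = 0 := by
    rw [← Matrix.trace_transpose, Matrix.transpose_mul, Matrix.transpose_transpose, hx]
  unfold frobNorm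
  apply Real.sqrt_le_sqrt
  have hD : 0 ≤ (Dᵀ * D).trace := by
    rw [← frob_sq_trace]; positivity
  rw [frob_sq_trace, frob_sq_trace, Matrix.transpose_add, Matrix.add_mul, Matrix.mul_add,
    Matrix.mul_add, Matrix.trace_add, Matrix.trace_add, Matrix.trace_add, hx, hy]
  linarith
end

section
/- Let X = L D₁ Wᵀ, Y = L D₂ Uᵀ, Z = V D₃ Wᵀ be a restricted SVD of the triplet (X, Y, Z), where L, W are invertible, U, V are orthogonal, and D₁, D₂, D₃ are diagonal with D₂ and D₃ invertible. If Y and Z are invertible, then Y⁻¹ X Z⁻¹ = U (D₂⁻¹ D₁ D₃⁻¹) Vᵀ. -/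
open scoped BigOperators
open Matrix

/-- Restricted SVD of the triplet (X, Y, Z) gives an SVD-like factorization of
Y⁻¹ X Z⁻¹. -/
theorem stmt6 {n : ℕ} (X Y Z L W U V D₁ D₂ D₃ : Matrix (Fin n) (Fin n) ℝ)
    (hL : IsUnit L) (hW : IsUnit W)
    (hU : Uᵀ * U = 1) (hV : Vᵀ * V = 1)
    (hD1 : D₁.IsDiag) (hD2 : D₂.IsDiag) (hD3 : D₃.IsDiag)
    (hD2u : IsUnit D₂) (hD3u : IsUnit D₃)
    (hX : X = L * D₁ * Wᵀ) (hY : Y = L * D₂ * Uᵀ) (hZ : Z = V * D₃ * Wᵀ)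
    (hYu : IsUnit Y) (hZu : IsUnit Z) :
    Y⁻¹ * X * Z⁻¹ = U * (D₂⁻¹ * D₁ * D₃⁻¹) * Vᵀ := by
  have hUi : (Uᵀ)⁻¹ = U := Matrix.inv_eq_right_inv hU
  have hVi : V⁻¹ = Vᵀ := Matrix.inv_eq_left_inv hV
  have hLd : IsUnit L.det := (Matrix.isUnit_iff_isUnit_det L).1 hL
  have hWd : IsUnit (Wᵀ).det := by
    rw [Matrix.det_transpose]
    exact (Matrix.isUnit_iff_isUnit_det W).1 hW
  have h1 : L⁻¹ * L = 1 := Matrix.nonsing_inv_mul L hLd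
  have h2 : Wᵀ * (Wᵀ)⁻¹ = 1 := Matrix.mul_nonsing_inv _ hWd
  subst hX hY hZ
  simp only [Matrix.mul_inv_rev, hUi, hVi]
  calc U * (D₂⁻¹ * L⁻¹) * (L * D₁ * Wᵀ) * ((Wᵀ)⁻¹ * (D₃⁻¹ * Vᵀ))
      = U * D₂⁻¹ * (L⁻¹ * L) * D₁ * (Wᵀ * (Wᵀ)⁻¹) * D₃⁻¹ * Vᵀ := by
        simp only [Matrix.mul_assoc]
    _ = U * (D₂⁻¹ * D₁ * D₃⁻¹) * Vᵀ := by
        rw [h1, h2]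
        simp only [Matrix.mul_assoc, Matrix.one_mul]
end
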